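/- Let (ω̂_n)_{n≥1} and (σ̂_n)_{n≥1} be sequences of density matrices, with ω̂_n and σ̂_n on (ℂ^d)^{⊗n}, both satisfying the upper factorization property with a common constant β ≥ 1. Then for every t ∈ [0,1] the sequence (1/n)·log Tr(ω̂_n^{1−t}·σ̂_n^{t}) converges in the extended reals to a limit C(t) ∈ [−∞, ∞) (i.e., its limsup equals its liminf), and moreover limsup_{n→∞} (1/n)·log P_min(ω̂_n, σ̂_n) ≤ inf_{t∈[0,1]} C(t). -/

import Mathlib

open Matrix Filter
open scoped ComplexOrder Classical

/-- The Kronecker product of a matrix on `(ℂ^d)^{⊗k}` and a matrix on `(ℂ^d)^{⊗(n-k)}`,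
viewed as a matrix on `(ℂ^d)^{⊗n}` via the canonical identification of `Fin n` with
`Fin k ⊕ Fin (n-k)`. -/
def tkron {d n k : ℕ} (h : k ≤ n)
    (M : Matrix (Fin k → Fin d) (Fin k → Fin d) ℂ)
    (N : Matrix (Fin (n - k) → Fin d) (Fin (n - k) → Fin d) ℂ) :
    Matrix (Fin n → Fin d) (Fin n → Fin d) ℂ :=
  Matrix.of fun x y =>
    M (fun i => x ⟨i.1, lt_of_lt_of_le i.2 h⟩) (fun i => y ⟨i.1, lt_of_lt_of_le i.2 h⟩) *
      N (fun j => x ⟨k + j.1, by have := j.2; omega⟩)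
        (fun j => y ⟨k + j.1, by have := j.2; omega⟩)

/-- A sequence of states on `(ℂ^d)^{⊗n}` satisfies the *upper factorization property*
with constant `β` if `ω_n ≤ β·(ω_k ⊗ ω_{n-k})` in the Loewner order for all `0 < k < n`. -/
def UpperFact {d : ℕ} (ω : (n : ℕ) → Matrix (Fin n → Fin d) (Fin n → Fin d) ℂ)
    (β : ℝ) : Prop :=
  ∀ (n k : ℕ) (_ : 0 < k) (hkn : k < n),
    (β • tkron hkn.le (ω k) (ω (n - k)) - ω n).PosSemidef

/-- A sequence of states on `(ℂ^d)^{⊗n}` satisfies the *lower factorization property*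
with constant `α` if `ω_n ≥ α·(ω_k ⊗ ω_{n-k})` in the Loewner order for all `0 < k < n`. -/
def LowerFact {d : ℕ} (ω : (n : ℕ) → Matrix (Fin n → Fin d) (Fin n → Fin d) ℂ)
    (α : ℝ) : Prop :=
  ∀ (n k : ℕ) (_ : 0 < k) (hkn : k < n),
    (ω n - α • tkron hkn.le (ω k) (ω (n - k)) ).PosSemidef

/-- The power `A^t` of a positive semidefinite matrix by the functional calculus, with the
convention that `A^0` is the support projection of `A` (and, more generally, the power is
taken only on the support).  Junk value `0` if `A` is not Hermitian. -/
noncomputable def mpow {I : Type*} [Fintype I] [DecidableEq I] (A : Matrix I I ℂ)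
    (t : ℝ) : Matrix I I ℂ :=
  if hA : A.IsHermitian then
    (hA.eigenvectorUnitary : Matrix I I ℂ) *
      Matrix.diagonal (fun i =>
        if hA.eigenvalues i = 0 then (0 : ℂ) else ((hA.eigenvalues i ^ t : ℝ) : ℂ)) *
      star (hA.eigenvectorUnitary : Matrix I I ℂ)
  else 0

/-- The minimal Bayesian error probability (with uniform prior) for discriminating the
states `ω` and `σ` by a binary test `0 ≤ A ≤ I`. -/
noncomputable def Pmin {I : Type*} [Fintype I] [DecidableEq I]
    (ω σ : Matrix I I ℂ) : ℝ :=
  sInf {v : ℝ | ∃ A : Matrix I I ℂ, A.PosSemidef ∧ (1 - A).PosSemidef ∧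
    v = ((1 / 2 : ℂ) * (ω * (1 - A)).trace + (1 / 2 : ℂ) * (σ * A).trace).re}

/-- Extended-real-valued logarithm, with `log x = -∞` for `x ≤ 0`. -/
noncomputable def elog (x : ℝ) : EReal :=
  if x ≤ 0 then ⊥ else ((Real.log x : ℝ) : EReal)

/-- The normalized logarithmic quasi-entropy sequence
`n ↦ (1/n)·log Tr(ω_n^{1-t}·σ_n^{t})`, valued in the extended reals. -/
noncomputable def chSeq {d : ℕ}
    (ω σ : (n : ℕ) → Matrix (Fin n → Fin d) (Fin n → Fin d) ℂ) (t : ℝ) (n : ℕ) : EReal :=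
  ((1 / (n : ℝ) : ℝ) : EReal) * elog (((mpow (ω n) (1 - t) * mpow (σ n) t).trace).re)

section MatrixPowers

variable {I : Type*} [Fintype I] [DecidableEq I]

/-- The real power taken only on the support, so that `suppPow 0 t = 0` for every `t`. -/
noncomputable def suppPow (x t : ℝ) : ℝ := if x = 0 then 0 else x ^ t

lemma suppPow_nonneg {x : ℝ} (hx : 0 ≤ x) (t : ℝ) : 0 ≤ suppPow x t := by
  unfold suppPow
  split_ifs
  · exact le_rfl
  · positivity

lemma suppPow_mul {x y : ℝ} (hx : 0 ≤ x) (hy : 0 ≤ y) (t : ℝ) :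
    suppPow (x * y) t = suppPow x t * suppPow y t := by
  unfold suppPow
  by_cases h : x = 0 <;> by_cases h' : y = 0 <;> simp [h, h', Real.mul_rpow hx hy]

lemma suppPow_mul_suppPow_one_sub {x : ℝ} (hx : 0 ≤ x) (t : ℝ) :
    suppPow x t * suppPow x (1 - t) = x := by
  unfold suppPow
  split_ifs with h
  · simp [h]
  · rw [← Real.rpow_add (lt_of_le_of_ne hx (Ne.symm h))]
    simp

lemma suppPow_of_pos {t : ℝ} (ht : 0 < t) (x : ℝ) : suppPow x t = x ^ t := by
  unfold suppPow
  split_ifs with h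
  · rw [h, Real.zero_rpow ht.ne']
  · rfl

lemma continuous_suppPow (x : ℝ) : Continuous (suppPow x) := by
  unfold suppPow
  split_ifs with h
  · exact continuous_const
  · exact Real.continuous_const_rpow h

/-- The matrix with real eigenvalues `a` in the orthonormal basis given by the unitary `U`. -/
noncomputable def unitaryConj (U : unitaryGroup I ℂ) (a : I → ℝ) : Matrix I I ℂ :=
  (U : Matrix I I ℂ) * diagonal (fun i => (a i : ℂ)) * star (U : Matrix I I ℂ)

lemma unitaryConj_mul (U : unitaryGroup I ℂ) (a b : I → ℝ) :
    unitaryConj U a * unitaryConj U b = unitaryConj U (fun i => a i * b i) := by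
  have h : star (U : Matrix I I ℂ) * (U : Matrix I I ℂ) = 1 := Unitary.coe_star_mul_self U
  simp only [unitaryConj]
  calc _ = (U : Matrix I I ℂ) * diagonal (fun i => (a i : ℂ)) *
        (star (U : Matrix I I ℂ) * (U : Matrix I I ℂ)) * diagonal (fun i => (b i : ℂ)) *
          star (U : Matrix I I ℂ) := by simp only [Matrix.mul_assoc]
    _ = _ := by
      rw [h, Matrix.mul_one, Matrix.mul_assoc (U : Matrix I I ℂ), diagonal_mul_diagonal]
      simp

lemma unitaryConj_sub (U : unitaryGroup I ℂ) (a b : I → ℝ) :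
    unitaryConj U a - unitaryConj U b = unitaryConj U (fun i => a i - b i) := by
  simp only [unitaryConj, ← Matrix.sub_mul, ← Matrix.mul_sub, diagonal_sub, Complex.ofReal_sub]

lemma smul_unitaryConj (c : ℝ) (U : unitaryGroup I ℂ) (a : I → ℝ) :
    c • unitaryConj U a = unitaryConj U (fun i => c * a i) := by
  have : diagonal (fun i => ((c * a i : ℝ) : ℂ)) = c • diagonal (fun i => (a i : ℂ)) := by
    rw [← diagonal_smul]
    congr 1
    ext i
    simp
  simp only [unitaryConj, this, Matrix.mul_smul, Matrix.smul_mul]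

lemma unitaryConj_one (U : unitaryGroup I ℂ) : unitaryConj U (fun _ => 1) = 1 := by
  simp [unitaryConj]

lemma posSemidef_unitaryConj (U : unitaryGroup I ℂ) {a : I → ℝ} (ha : ∀ i, 0 ≤ a i) :
    (unitaryConj U a).PosSemidef :=
  (PosSemidef.diagonal (d := fun i => (a i : ℂ))
    fun i => by simpa using ha i).mul_mul_conjTranspose_same _

lemma isHermitian_unitaryConj (U : unitaryGroup I ℂ) (a : I → ℝ) :
    (unitaryConj U a).IsHermitian :=
  isHermitian_mul_mul_conjTranspose _ (isHermitian_diagonal_iff.2 fun i => by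
    simp [IsSelfAdjoint])

lemma eq_unitaryConj {A : Matrix I I ℂ} (hA : A.IsHermitian) :
    A = unitaryConj hA.eigenvectorUnitary hA.eigenvalues := by
  conv_lhs => rw [hA.spectral_theorem]
  rfl

lemma exists_eq_unitaryConj {A : Matrix I I ℂ} (hA : A.PosSemidef) :
    ∃ (U : unitaryGroup I ℂ) (a : I → ℝ), (∀ i, 0 ≤ a i) ∧ A = unitaryConj U a :=
  ⟨_, _, hA.eigenvalues_nonneg, eq_unitaryConj hA.isHermitian⟩

/-- Applying a function to the eigenvalues does not depend on the chosen diagonalization. -/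
lemma unitaryConj_comp_congr {U V : unitaryGroup I ℂ} {a b : I → ℝ}
    (h : unitaryConj U a = unitaryConj V b) (f : ℝ → ℝ) :
    unitaryConj U (fun i => f (a i)) = unitaryConj V (fun i => f (b i)) := by
  have hU : star (U : Matrix I I ℂ) * (U : Matrix I I ℂ) = 1 := Unitary.coe_star_mul_self U
  have hU' : (U : Matrix I I ℂ) * star (U : Matrix I I ℂ) = 1 := Unitary.coe_mul_star_self U
  have hV : star (V : Matrix I I ℂ) * (V : Matrix I I ℂ) = 1 := Unitary.coe_star_mul_self V
  have hV' : (V : Matrix I I ℂ) * star (V : Matrix I I ℂ) = 1 := Unitary.coe_mul_star_self V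
  set S : Matrix I I ℂ := star (V : Matrix I I ℂ) * (U : Matrix I I ℂ) with hS
  have key : S * diagonal (fun i => (a i : ℂ)) = diagonal (fun i => (b i : ℂ)) * S := by
    calc S * diagonal (fun i => (a i : ℂ))
        = star (V : Matrix I I ℂ) * unitaryConj U a * (U : Matrix I I ℂ) := by
          simp only [unitaryConj, hS, Matrix.mul_assoc, hU, Matrix.mul_one]
      _ = (star (V : Matrix I I ℂ) * (V : Matrix I I ℂ)) * diagonal (fun i => (b i : ℂ)) * S := by
          rw [h]
          simp only [unitaryConj, hS, Matrix.mul_assoc]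
      _ = _ := by rw [hV, Matrix.one_mul]
  have key' : S * diagonal (fun i => (f (a i) : ℂ)) = diagonal (fun i => (f (b i) : ℂ)) * S := by
    ext i j
    have hij := congrFun (congrFun key i) j
    rw [mul_diagonal, diagonal_mul] at hij ⊢
    by_cases h0 : S i j = 0
    · simp [h0]
    · have : (a j : ℂ) = b i := mul_left_cancel₀ h0 (by rw [hij, mul_comm])
      rw [Complex.ofReal_inj.1 this, mul_comm]
  calc unitaryConj U (fun i => f (a i))
      = (V : Matrix I I ℂ) * (S * diagonal (fun i => (f (a i) : ℂ))) *
          star (U : Matrix I I ℂ) := by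
        simp only [unitaryConj, hS, ← Matrix.mul_assoc, hV', Matrix.one_mul]
    _ = (V : Matrix I I ℂ) * diagonal (fun i => (f (b i) : ℂ)) * star (V : Matrix I I ℂ) *
          ((U : Matrix I I ℂ) * star (U : Matrix I I ℂ)) := by
        rw [key']
        simp only [hS, Matrix.mul_assoc]
    _ = _ := by rw [hU', Matrix.mul_one]; rfl

lemma mpow_eq_unitaryConj {A : Matrix I I ℂ} (hA : A.IsHermitian) (t : ℝ) :
    mpow A t = unitaryConj hA.eigenvectorUnitary (fun i => suppPow (hA.eigenvalues i) t) := by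
  rw [mpow, dif_pos hA, unitaryConj]
  congr 3
  ext i
  unfold suppPow
  split_ifs <;> simp

lemma mpow_unitaryConj (U : unitaryGroup I ℂ) (a : I → ℝ) (t : ℝ) :
    mpow (unitaryConj U a) t = unitaryConj U (fun i => suppPow (a i) t) := by
  rw [mpow_eq_unitaryConj (isHermitian_unitaryConj U a)]
  exact unitaryConj_comp_congr (eq_unitaryConj _).symm (suppPow · t)

lemma posSemidef_mpow {A : Matrix I I ℂ} (hA : A.PosSemidef) (t : ℝ) : (mpow A t).PosSemidef := by
  obtain ⟨U, a, ha, rfl⟩ := exists_eq_unitaryConj hA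
  rw [mpow_unitaryConj]
  exact posSemidef_unitaryConj U fun i => suppPow_nonneg (ha i) t

lemma mpow_mul_mpow_one_sub {A : Matrix I I ℂ} (hA : A.PosSemidef) (t : ℝ) :
    mpow A t * mpow A (1 - t) = A := by
  obtain ⟨U, a, ha, rfl⟩ := exists_eq_unitaryConj hA
  simp only [mpow_unitaryConj, unitaryConj_mul, suppPow_mul_suppPow_one_sub (ha _)]

lemma mpow_smul {A : Matrix I I ℂ} (hA : A.PosSemidef) {c : ℝ} (hc : 0 < c) (t : ℝ) :
    mpow (c • A) t = c ^ t • mpow A t := by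
  obtain ⟨U, a, ha, rfl⟩ := exists_eq_unitaryConj hA
  simp only [smul_unitaryConj, mpow_unitaryConj, suppPow_mul hc.le (ha _)]
  simp [suppPow, hc.ne']

lemma continuous_mpow {A : Matrix I I ℂ} (hA : A.PosSemidef) : Continuous (mpow A) := by
  obtain ⟨U, a, ha, rfl⟩ := exists_eq_unitaryConj hA
  rw [funext (mpow_unitaryConj U a)]
  unfold unitaryConj
  refine (continuous_const.matrix_mul (Continuous.matrix_diagonal ?_)).matrix_mul continuous_const
  exact continuous_pi fun i => Complex.continuous_ofReal.comp (continuous_suppPow (a i))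

open scoped MatrixOrder Matrix.Norms.L2Operator in
lemma mpow_eq_rpow {A : Matrix I I ℂ} (hA : A.PosSemidef) {t : ℝ} (ht : 0 < t) :
    mpow A t = A ^ t := by
  rw [CFC.rpow_eq_cfc_real (nonneg_iff_posSemidef.2 hA), hA.isHermitian.cfc_eq,
    mpow_eq_unitaryConj hA.isHermitian]
  simp only [suppPow_of_pos ht]
  rfl

open scoped MatrixOrder Matrix.Norms.L2Operator in
/-- Operator monotonicity of `A ↦ A ^ t` for `t ∈ [0, 1]`, including support projections. -/
lemma mpow_mono {A B : Matrix I I ℂ} (hA : A.PosSemidef) (hAB : (B - A).PosSemidef) {t : ℝ}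
    (ht : t ∈ Set.Icc (0 : ℝ) 1) : (mpow B t - mpow A t).PosSemidef := by
  have hB : B.PosSemidef := by simpa using hA.add hAB
  have hpos : ∀ s ∈ Set.Ioc (0 : ℝ) 1, mpow A s ≤ mpow B s := fun s hs => by
    rw [mpow_eq_rpow hA hs.1, mpow_eq_rpow hB hs.1]
    exact CFC.rpow_le_rpow ⟨hs.1.le, hs.2⟩ hAB
  rcases ht.1.eq_or_lt with rfl | h0
  · have hlim : ∀ {C : Matrix I I ℂ}, C.PosSemidef →
        Tendsto (mpow C) (nhdsWithin 0 (Set.Ioi 0)) (nhds (mpow C 0)) := fun hC =>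
      (continuous_mpow hC).continuousAt.tendsto.mono_left nhdsWithin_le_nhds
    refine le_of_tendsto_of_tendsto (hlim hA) (hlim hB) ?_
    filter_upwards [Ioc_mem_nhdsGT (zero_lt_one (α := ℝ))] with s hs using hpos s hs
  · exact hpos t ⟨h0, ht.2⟩

open scoped MatrixOrder Matrix.Norms.L2Operator in
lemma PosSemidef.re_trace_mul_nonneg {A B : Matrix I I ℂ} (hA : A.PosSemidef)
    (hB : B.PosSemidef) : 0 ≤ ((A * B).trace).re := by
  obtain ⟨C, rfl⟩ := CStarAlgebra.nonneg_iff_eq_star_mul_self.1 (nonneg_iff_posSemidef.2 hB)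
  rw [← Matrix.mul_assoc, Matrix.trace_mul_comm, ← Matrix.mul_assoc]
  exact (Complex.le_def.1 (hA.mul_mul_conjTranspose_same C).trace_nonneg).1

lemma re_trace_mul_le_left {A B C : Matrix I I ℂ} (h : (B - A).PosSemidef) (hC : C.PosSemidef) :
    ((A * C).trace).re ≤ ((B * C).trace).re := by
  have := PosSemidef.re_trace_mul_nonneg h hC
  rw [Matrix.sub_mul, Matrix.trace_sub, Complex.sub_re] at this
  linarith

lemma re_trace_mul_le_right {A B C : Matrix I I ℂ} (h : (B - A).PosSemidef) (hC : C.PosSemidef) :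
    ((C * A).trace).re ≤ ((C * B).trace).re := by
  rw [Matrix.trace_mul_comm C A, Matrix.trace_mul_comm C B]
  exact re_trace_mul_le_left h hC

/-- If `A ≤ B + P` with `P` positive semidefinite, then
`Tr A - Tr (A ^ (1 - t) * B ^ t) ≤ Tr P`. -/
lemma re_trace_le_of_le_add {A B P : Matrix I I ℂ} (hA : A.PosSemidef) (hB : B.PosSemidef)
    (hP : P.PosSemidef) (h : (B + P - A).PosSemidef) {t : ℝ} (ht : t ∈ Set.Icc (0 : ℝ) 1) :
    (A.trace).re ≤ (P.trace).re + ((mpow A (1 - t) * mpow B t).trace).re := by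
  have ht' : 1 - t ∈ Set.Icc (0 : ℝ) 1 := ⟨by linarith [ht.2], by linarith [ht.1]⟩
  have hBP : (B + P).PosSemidef := hB.add hP
  have hle : (B + P - B).PosSemidef := by simpa using hP
  have h₁ := re_trace_mul_le_left (mpow_mono hA h ht) (posSemidef_mpow hA (1 - t))
  have h₂ := re_trace_mul_le_right (mpow_mono hA h ht') (mpow_mono hB hle ht)
  have h₃ := re_trace_mul_le_right (mpow_mono hB hle ht') (posSemidef_mpow hB t)
  rw [mpow_mul_mpow_one_sub hA] at h₁
  rw [mpow_mul_mpow_one_sub hB] at h₃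
  simp only [Matrix.sub_mul, Matrix.trace_sub, Complex.sub_re, mpow_mul_mpow_one_sub hBP,
    Matrix.trace_add, Complex.add_re] at h₂
  rw [Matrix.trace_mul_comm (mpow A (1 - t))]
  linarith

lemma Pmin_le_of_test {A B E : Matrix I I ℂ} (hA : A.PosSemidef) (hB : B.PosSemidef)
    (hE : E.PosSemidef) (hE' : (1 - E).PosSemidef) :
    Pmin A B ≤ ((1 / 2 : ℂ) * (A * (1 - E)).trace + (1 / 2 : ℂ) * (B * E).trace).re := by
  refine csInf_le ⟨0, ?_⟩ ⟨E, hE, hE', rfl⟩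
  rintro _ ⟨F, hF, hF', rfl⟩
  have h₁ := PosSemidef.re_trace_mul_nonneg hA hF'
  have h₂ := PosSemidef.re_trace_mul_nonneg hB hF
  norm_num
  linarith

/-- The quantum Chernoff bound on the error probability of a single discrimination task. -/
lemma Pmin_le_re_trace_mpow {A B : Matrix I I ℂ} (hA : A.PosSemidef) (hB : B.PosSemidef) {t : ℝ}
    (ht : t ∈ Set.Icc (0 : ℝ) 1) : Pmin A B ≤ ((mpow A (1 - t) * mpow B t).trace).re := by
  have hD : (A - B).IsHermitian := hA.isHermitian.sub hB.isHermitian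
  have hDeq := eq_unitaryConj hD
  set U := hD.eigenvectorUnitary
  set l := hD.eigenvalues
  set P := unitaryConj U (fun i => max (l i) 0) with hPdef
  set E := unitaryConj U (fun i => if 0 < l i then 1 else 0) with hEdef
  have hP : P.PosSemidef := posSemidef_unitaryConj U fun i => le_max_right _ _
  have hPD : (B + P - A).PosSemidef := by
    have : B + P - A = P - (A - B) := by abel
    rw [this, hDeq, hPdef, unitaryConj_sub]
    exact posSemidef_unitaryConj U fun i => sub_nonneg.2 (le_max_left _ _)
  have hE : E.PosSemidef := posSemidef_unitaryConj U fun i => by split_ifs <;> norm_num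
  have hE' : (1 - E).PosSemidef := by
    rw [← unitaryConj_one U, hEdef, unitaryConj_sub]
    exact posSemidef_unitaryConj U fun i => by split_ifs <;> norm_num
  have hDE : (A - B) * E = P := by
    rw [hDeq, hEdef, unitaryConj_mul, hPdef]
    congr 1
    ext i
    split_ifs with h
    · simp [h.le]
    · simp [not_lt.1 h]
  have htr := re_trace_le_of_le_add hA hB hP hPD ht
  have hnonneg := PosSemidef.re_trace_mul_nonneg (posSemidef_mpow hA (1 - t)) (posSemidef_mpow hB t)
  refine (Pmin_le_of_test hA hB hE hE').trans ?_
  rw [← hDE] at htr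
  simp only [Matrix.sub_mul, Matrix.trace_sub, Complex.sub_re] at htr
  rw [← mul_add, Matrix.mul_sub, Matrix.mul_one, Matrix.trace_sub]
  norm_num
  linarith

end MatrixPowers

section TensorPower

variable {d n k : ℕ}

/-- Splitting a multi-index into its first `k` and its last `n - k` entries. -/
def splitEquiv (h : k ≤ n) :
    (Fin n → Fin d) ≃ (Fin k → Fin d) × (Fin (n - k) → Fin d) where
  toFun x := (fun i => x ⟨i.1, lt_of_lt_of_le i.2 h⟩,
    fun j => x ⟨k + j.1, by have := j.2; omega⟩)
  invFun p i := if hi : i.1 < k then p.1 ⟨i.1, hi⟩ else p.2 ⟨i.1 - k, by have := i.2; omega⟩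
  left_inv x := by
    ext i
    by_cases hi : i.1 < k
    · simp [hi]
    · have : k + (i.1 - k) = i.1 := by omega
      simp [hi, this]
  right_inv p := by
    ext i <;> simp

open scoped Kronecker in
lemma tkron_eq_submatrix (h : k ≤ n) (M : Matrix (Fin k → Fin d) (Fin k → Fin d) ℂ)
    (N : Matrix (Fin (n - k) → Fin d) (Fin (n - k) → Fin d) ℂ) :
    tkron h M N = (M ⊗ₖ N).submatrix (splitEquiv h) (splitEquiv h) := rfl

lemma tkron_mul_tkron (h : k ≤ n) (M M' : Matrix (Fin k → Fin d) (Fin k → Fin d) ℂ)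
    (N N' : Matrix (Fin (n - k) → Fin d) (Fin (n - k) → Fin d) ℂ) :
    tkron h M N * tkron h M' N' = tkron h (M * M') (N * N') := by
  simp only [tkron_eq_submatrix, submatrix_mul_equiv, mul_kronecker_mul]

lemma trace_tkron (h : k ≤ n) (M : Matrix (Fin k → Fin d) (Fin k → Fin d) ℂ)
    (N : Matrix (Fin (n - k) → Fin d) (Fin (n - k) → Fin d) ℂ) :
    (tkron h M N).trace = M.trace * N.trace := by
  rw [tkron_eq_submatrix, ← trace_kronecker]
  exact (splitEquiv h).sum_comp fun p => (kroneckerMap (· * ·) M N) p p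

lemma star_tkron (h : k ≤ n) (M : Matrix (Fin k → Fin d) (Fin k → Fin d) ℂ)
    (N : Matrix (Fin (n - k) → Fin d) (Fin (n - k) → Fin d) ℂ) :
    star (tkron h M N) = tkron h (star M) (star N) := by
  simp only [tkron_eq_submatrix, star_eq_conjTranspose, conjTranspose_submatrix,
    conjTranspose_kronecker]

lemma tkron_one_one (h : k ≤ n) :
    tkron h (1 : Matrix (Fin k → Fin d) (Fin k → Fin d) ℂ) 1 = 1 := by
  rw [tkron_eq_submatrix, one_kronecker_one, submatrix_one_equiv]

lemma tkron_diagonal (h : k ≤ n) (a : (Fin k → Fin d) → ℂ) (b : (Fin (n - k) → Fin d) → ℂ) :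
    tkron h (diagonal a) (diagonal b) =
      diagonal fun x => a (splitEquiv h x).1 * b (splitEquiv h x).2 := by
  rw [tkron_eq_submatrix, diagonal_kronecker_diagonal, submatrix_diagonal_equiv]
  rfl

/-- The tensor product of two unitary matrices. -/
def tkronUnitary (h : k ≤ n) (U : unitaryGroup (Fin k → Fin d) ℂ)
    (V : unitaryGroup (Fin (n - k) → Fin d) ℂ) : unitaryGroup (Fin n → Fin d) ℂ :=
  ⟨tkron h U V, by
    rw [mem_unitaryGroup_iff, star_tkron, tkron_mul_tkron, mem_unitaryGroup_iff.1 U.2,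
      mem_unitaryGroup_iff.1 V.2, tkron_one_one]⟩

lemma tkron_unitaryConj (h : k ≤ n) (U : unitaryGroup (Fin k → Fin d) ℂ)
    (V : unitaryGroup (Fin (n - k) → Fin d) ℂ) (a : (Fin k → Fin d) → ℝ)
    (b : (Fin (n - k) → Fin d) → ℝ) :
    tkron h (unitaryConj U a) (unitaryConj V b) =
      unitaryConj (tkronUnitary h U V)
        (fun x => a (splitEquiv h x).1 * b (splitEquiv h x).2) := by
  simp only [unitaryConj, tkronUnitary, star_tkron, ← tkron_mul_tkron, tkron_diagonal,
    Complex.ofReal_mul]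

lemma posSemidef_tkron (h : k ≤ n) {M : Matrix (Fin k → Fin d) (Fin k → Fin d) ℂ}
    {N : Matrix (Fin (n - k) → Fin d) (Fin (n - k) → Fin d) ℂ} (hM : M.PosSemidef)
    (hN : N.PosSemidef) : (tkron h M N).PosSemidef := by
  rw [tkron_eq_submatrix]
  exact (hM.kronecker hN).submatrix _

lemma mpow_tkron (h : k ≤ n) {M : Matrix (Fin k → Fin d) (Fin k → Fin d) ℂ}
    {N : Matrix (Fin (n - k) → Fin d) (Fin (n - k) → Fin d) ℂ} (hM : M.PosSemidef)
    (hN : N.PosSemidef) (t : ℝ) : mpow (tkron h M N) t = tkron h (mpow M t) (mpow N t) := by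
  obtain ⟨U, a, ha, rfl⟩ := exists_eq_unitaryConj hM
  obtain ⟨V, b, hb, rfl⟩ := exists_eq_unitaryConj hN
  simp only [tkron_unitaryConj, mpow_unitaryConj, suppPow_mul (ha _) (hb _)]

/-- The quasi-entropy `Tr (A ^ (1 - t) * B ^ t)` is submultiplicative up to the factor `β`
under upper factorization. -/
lemma re_trace_mpow_le_of_le_tkron (h : k ≤ n) {β : ℝ} (hβ : 0 < β)
    {A B : Matrix (Fin n → Fin d) (Fin n → Fin d) ℂ}
    {A₁ B₁ : Matrix (Fin k → Fin d) (Fin k → Fin d) ℂ}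
    {A₂ B₂ : Matrix (Fin (n - k) → Fin d) (Fin (n - k) → Fin d) ℂ}
    (hA : A.PosSemidef) (hB : B.PosSemidef) (hA₁ : A₁.PosSemidef) (hB₁ : B₁.PosSemidef)
    (hA₂ : A₂.PosSemidef) (hB₂ : B₂.PosSemidef)
    (hAle : (β • tkron h A₁ A₂ - A).PosSemidef) (hBle : (β • tkron h B₁ B₂ - B).PosSemidef)
    {t : ℝ} (ht : t ∈ Set.Icc (0 : ℝ) 1) :
    ((mpow A (1 - t) * mpow B t).trace).re ≤
      β * (((mpow A₁ (1 - t) * mpow B₁ t).trace).re *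
        ((mpow A₂ (1 - t) * mpow B₂ t).trace).re) := by
  have ht' : 1 - t ∈ Set.Icc (0 : ℝ) 1 := ⟨by linarith [ht.2], by linarith [ht.1]⟩
  have hAt := posSemidef_tkron h hA₁ hA₂
  have hBt := posSemidef_tkron h hB₁ hB₂
  have him : ∀ {m : ℕ} {C D : Matrix (Fin m → Fin d) (Fin m → Fin d) ℂ}, C.PosSemidef →
      D.PosSemidef → ((C * D).trace).im = 0 := by
    intro m C D hC hD
    have : star (C * D).trace = (C * D).trace := by
      rw [← trace_conjTranspose, conjTranspose_mul, hC.isHermitian.eq, hD.isHermitian.eq,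
        trace_mul_comm]
    exact Complex.conj_eq_iff_im.1 this
  calc ((mpow A (1 - t) * mpow B t).trace).re
      ≤ ((mpow (β • tkron h A₁ A₂) (1 - t) * mpow B t).trace).re :=
        re_trace_mul_le_left (mpow_mono hA hAle ht') (posSemidef_mpow hB t)
    _ ≤ ((mpow (β • tkron h A₁ A₂) (1 - t) * mpow (β • tkron h B₁ B₂) t).trace).re :=
        re_trace_mul_le_right (mpow_mono hB hBle ht)
          (posSemidef_mpow (hAt.smul hβ.le) (1 - t))
    _ = _ := by
      rw [mpow_smul hAt hβ, mpow_smul hBt hβ, smul_mul_smul_comm, ← Real.rpow_add hβ,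
        mpow_tkron h hA₁ hA₂, mpow_tkron h hB₁ hB₂, tkron_mul_tkron, trace_smul, trace_tkron]
      simp [him (posSemidef_mpow hA₁ (1 - t)) (posSemidef_mpow hB₁ t)]

end TensorPower

section Fekete

lemma elog_mono : Monotone elog := by
  intro x y hxy
  unfold elog
  split_ifs with hx hy hy
  · exact le_rfl
  · exact bot_le
  · exact absurd (hxy.trans hy) hx
  · exact EReal.coe_le_coe (Real.log_le_log (not_le.1 hx) hxy)

lemma inv_mul_elog_mono (n : ℕ) {x y : ℝ} (h : x ≤ y) :
    ((1 / (n : ℝ) : ℝ) : EReal) * elog x ≤ ((1 / (n : ℝ) : ℝ) : EReal) * elog y :=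
  mul_le_mul_of_nonneg_left (elog_mono h) (EReal.coe_nonneg.2 (by positivity))

lemma inv_mul_elog_of_pos {x : ℝ} (hx : 0 < x) (n : ℕ) :
    ((1 / (n : ℝ) : ℝ) : EReal) * elog x = ((Real.log x / n : ℝ) : EReal) := by
  rw [elog, if_neg hx.not_ge, ← EReal.coe_mul]
  congr 1
  ring

/-- Fekete's lemma for sequences that are submultiplicative up to a constant, in the extended
reals. -/
lemma limsup_inv_mul_elog_of_submultiplicative {q : ℕ → ℝ} {β : ℝ} (hβ : 1 ≤ β)
    (hq : ∀ n, 1 ≤ n → 0 ≤ q n)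
    (hmul : ∀ m n, 1 ≤ m → 1 ≤ n → q (m + n) ≤ β * (q m * q n)) :
    limsup (fun n : ℕ => ((1 / (n : ℝ) : ℝ) : EReal) * elog (q n)) atTop =
        liminf (fun n : ℕ => ((1 / (n : ℝ) : ℝ) : EReal) * elog (q n)) atTop ∧
      limsup (fun n : ℕ => ((1 / (n : ℝ) : ℝ) : EReal) * elog (q n)) atTop ≠ ⊤ := by
  set s : ℕ → EReal := fun n => ((1 / (n : ℝ) : ℝ) : EReal) * elog (q n) with hs
  have hβ0 : 0 < β := zero_lt_one.trans_le hβ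
  by_cases hzero : ∃ m, 1 ≤ m ∧ q m = 0
  · obtain ⟨m, hm, hqm⟩ := hzero
    have hev : s =ᶠ[atTop] fun _ => (⊥ : EReal) := by
      filter_upwards [eventually_gt_atTop m] with n hn
      have hqn := hmul m (n - m) hm (by omega)
      rw [Nat.add_sub_cancel' hn.le, hqm] at hqn
      have hn0 : (0 : ℝ) < n := by exact_mod_cast hm.trans hn.le
      rw [hs]
      simp only [elog, if_pos (show q n ≤ 0 by simpa using hqn)]
      exact EReal.coe_mul_bot_of_pos (by positivity)
    rw [limsup_congr hev, liminf_congr hev]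
    simp
  · push Not at hzero
    have hpos : ∀ n, 1 ≤ n → 0 < q n := fun n hn => (hq n hn).lt_of_ne' (hzero n hn)
    set u : ℕ → ℝ := fun n => if n = 0 then 0 else Real.log β + Real.log (q n) with hu
    have hsub : Subadditive u := by
      intro m n
      rcases Nat.eq_zero_or_pos m with rfl | hm
      · simp [hu]
      rcases Nat.eq_zero_or_pos n with rfl | hn
      · simp [hu]
      have h := Real.log_le_log (hpos (m + n) (by omega)) (hmul m n hm hn)
      rw [Real.log_mul hβ0.ne' (mul_pos (hpos m hm) (hpos n hn)).ne',
        Real.log_mul (hpos m hm).ne' (hpos n hn).ne'] at h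
      simp only [hu, if_neg hm.ne', if_neg hn.ne', if_neg (show m + n ≠ 0 by omega)]
      linarith
    have hseq : ∀ n, 1 ≤ n → s n = ((Real.log (q n) / n : ℝ) : EReal) := fun n hn =>
      inv_mul_elog_of_pos (hpos n hn) n
    have hun : ∀ n : ℕ, 1 ≤ n → u n / n = Real.log β / n + Real.log (q n) / n := fun n hn => by
      simp only [hu, if_neg (show n ≠ 0 by omega), add_div]
    have hle : ∀ n : ℕ, 1 ≤ n → limsup s atTop ≤ ((u n / n : ℝ) : EReal) := by
      intro n hn
      refine EReal.le_of_forall_lt_iff_le.1 fun L hL => ?_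
      refine limsup_le_of_le (by isBoundedDefault) ?_
      filter_upwards [hsub.eventually_div_lt_of_div_lt (by omega) (EReal.coe_lt_coe_iff.1 hL),
        eventually_ge_atTop 1] with p hp hp1
      rw [hseq p hp1]
      refine EReal.coe_le_coe ?_
      have : 0 ≤ Real.log β / p := div_nonneg (Real.log_nonneg hβ) (by positivity)
      linarith [hun p hp1]
    refine ⟨le_antisymm ?_ (liminf_le_limsup (by isBoundedDefault) (by isBoundedDefault)),
      ((hle 1 le_rfl).trans_lt (EReal.coe_lt_top _)).ne⟩
    refine EReal.ge_of_forall_gt_iff_ge.1 fun L hL => ?_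
    obtain ⟨L', hLL', hL'⟩ := EReal.lt_iff_exists_real_btwn.1 hL
    have hlim : Tendsto (fun n : ℕ => Real.log β / n) atTop (nhds 0) :=
      tendsto_const_div_atTop_nhds_zero_nat _
    refine le_liminf_of_le (by isBoundedDefault) ?_
    filter_upwards [hlim.eventually (gt_mem_nhds (sub_pos.2 (EReal.coe_lt_coe_iff.1 hLL'))),
      eventually_ge_atTop 1] with n hn hn1
    rw [hseq n hn1]
    refine EReal.coe_le_coe ?_
    have := EReal.coe_lt_coe_iff.1 (hL'.trans_le (hle n hn1))
    linarith [hun n hn1]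

end Fekete

/-- Chernoff upper bound under upper factorization. -/
theorem chernoff_upper_bound_of_upperFact
    (d : ℕ)
    (ω σ : (n : ℕ) → Matrix (Fin n → Fin d) (Fin n → Fin d) ℂ)
    (hω : ∀ n, 1 ≤ n → (ω n).PosSemidef ∧ (ω n).trace = 1)
    (hσ : ∀ n, 1 ≤ n → (σ n).PosSemidef ∧ (σ n).trace = 1)
    (β : ℝ) (hβ : 1 ≤ β)
    (hωf : UpperFact ω β) (hσf : UpperFact σ β) :
    (∀ t ∈ Set.Icc (0 : ℝ) 1,
        limsup (chSeq ω σ t) atTop = liminf (chSeq ω σ t) atTop ∧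
        limsup (chSeq ω σ t) atTop ≠ (⊤ : EReal)) ∧
    limsup (fun n : ℕ => ((1 / (n : ℝ) : ℝ) : EReal) * elog (Pmin (ω n) (σ n))) atTop ≤
      ⨅ t ∈ Set.Icc (0 : ℝ) 1, limsup (chSeq ω σ t) atTop := by
  have hnonneg : ∀ t n, 1 ≤ n → 0 ≤ ((mpow (ω n) (1 - t) * mpow (σ n) t).trace).re :=
    fun t n hn => PosSemidef.re_trace_mul_nonneg (posSemidef_mpow (hω n hn).1 (1 - t))
      (posSemidef_mpow (hσ n hn).1 t)
  refine ⟨fun t ht => ?_, le_iInf₂ fun t ht => ?_⟩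
  · refine limsup_inv_mul_elog_of_submultiplicative hβ (hnonneg t) fun m n hm hn => ?_
    have h := re_trace_mpow_le_of_le_tkron (show m ≤ m + n by omega) (zero_lt_one.trans_le hβ)
      (hω (m + n) (by omega)).1 (hσ (m + n) (by omega)).1 (hω m hm).1 (hσ m hm).1
      (hω (m + n - m) (by omega)).1 (hσ (m + n - m) (by omega)).1
      (hωf (m + n) m hm (by omega)) (hσf (m + n) m hm (by omega)) ht
    rwa [Nat.add_sub_cancel_left] at h
  · refine limsup_le_limsup ?_ (by isBoundedDefault) (by isBoundedDefault)
    filter_upwards [eventually_ge_atTop 1] with n hn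
    exact inv_mul_elog_mono n (Pmin_le_re_trace_mpow (hω n hn).1 (hσ n hn).1 ht)
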